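/- arXiv:math/0403094 — 6 statements merged into one kernel-verified Lean document; each statement's English description precedes it below -/
import Mathlib

section
/- Let P be a finite bounded poset and let A and B be antichains in P. If A ≤ B in the partial order on antichains, then B* ≤ A*, where * denotes the blocker operation. -/
/-- The blocker of a set `A` in a poset with bottom element: the minimal elements among
those having a common atom with every member of `A`. -/
def blocker {P : Type*} [PartialOrder P] [OrderBot P] (A : Set P) : Set P :=
  {x | (∀ a ∈ A, ∃ l : P, IsAtom l ∧ l ≤ x ∧ l ≤ a) ∧
    ∀ y : P, (∀ a ∈ A, ∃ l : P, IsAtom l ∧ l ≤ y ∧ l ≤ a) → y ≤ x → y = x}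

/-- An antichain in a poset with bottom element, in the sense of Björner–Hultman:
a nonempty set avoiding `⊥` whose elements are pairwise incomparable. -/
def IsAnti {P : Type*} [PartialOrder P] [OrderBot P] (A : Set P) : Prop :=
  A.Nonempty ∧ ⊥ ∉ A ∧ IsAntichain (· ≤ ·) A

/-- The partial order on antichains: `antLE A B` iff for each `b ∈ B` there is
`a ∈ A` with `a ≤ b`. -/
def antLE {P : Type*} [Preorder P] (A B : Set P) : Prop :=
  ∀ b ∈ B, ∃ a ∈ A, a ≤ b

/-- The elements having a common atom with every member of `A`: the analogue in a poset of the
transversals of a hypergraph with set of edges `A`. The blocker of `A` consists of the minimal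
ones. -/
def IsTransversal {P : Type*} [Preorder P] [OrderBot P] (A : Set P) (x : P) : Prop :=
  ∀ a ∈ A, ∃ l : P, IsAtom l ∧ l ≤ x ∧ l ≤ a

theorem IsTransversal.of_antLE {P : Type*} [Preorder P] [OrderBot P] {A B : Set P} {x : P}
    (hx : IsTransversal A x) (hAB : antLE A B) : IsTransversal B x := by
  intro b hb
  obtain ⟨a, ha, hab⟩ := hAB b hb
  obtain ⟨l, hl, hlx, hla⟩ := hx a ha
  exact ⟨l, hl, hlx, hla.trans hab⟩

section PartialOrder

variable {P : Type*} [PartialOrder P] [OrderBot P] {A : Set P} {x : P}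

theorem mem_blocker_iff_minimal : x ∈ blocker A ↔ Minimal (IsTransversal A) x :=
  ⟨fun hx ↦ minimal_iff.2 ⟨hx.1, fun y hy hyx ↦ (hx.2 y hy hyx).symm⟩,
    fun hx ↦ ⟨hx.prop, fun _ ↦ hx.eq_of_le⟩⟩

theorem IsTransversal.exists_mem_blocker_le [WellFoundedLT P] (hx : IsTransversal A x) :
    ∃ m ∈ blocker A, m ≤ x := by
  obtain ⟨m, hmx, hm⟩ := exists_minimal_le_of_wellFoundedLT (IsTransversal A) x hx
  exact ⟨m, mem_blocker_iff_minimal.2 hm, hmx⟩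

end PartialOrder

theorem blocker_antitone_general {P : Type*} [PartialOrder P] [OrderBot P] [WellFoundedLT P]
    {A B : Set P} (hAB : antLE A B) : antLE (blocker B) (blocker A) := by
  intro x hx
  have hxA : IsTransversal A x := (mem_blocker_iff_minimal.1 hx).prop
  exact (hxA.of_antLE hAB).exists_mem_blocker_le

/-- Lemma 2.3(1): if `A ≤ B` then `B* ≤ A*`. -/
theorem blocker_antitone {P : Type*} [PartialOrder P] [BoundedOrder P] [Fintype P]
    (A B : Set P) (hA : IsAnti A) (hB : IsAnti B) (hAB : antLE A B) :
    antLE (blocker B) (blocker A) :=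
  blocker_antitone_general hAB
end

section
/- Let P be a finite bounded poset and let A be an antichain in P. Then A*** = A*, where * denotes the blocker operation. -/
/-!
Sharing an atom is a symmetric relation, so sending `A` to the set `N A` of elements sharing an
atom with every member of `A` is an antitone Galois connection of `Set P` with itself; hence
`N (N (N A)) = N A`. The blocker `A*` consists of the minimal elements of `N A`, and sharing an
atom with a given element is preserved on passing to a larger element, so `N (A*) = N (N A)`.
Therefore `N (A**) = N (N (N A)) = N A`, and taking minimal elements gives `A*** = A*`.
-/

open Order

theorem lowerPolar_lowerPolar_lowerPolar {α : Type*} (r : α → α → Prop) [Std.Symm r]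
    (s : Set α) : lowerPolar r (lowerPolar r (lowerPolar r s)) = lowerPolar r s := by
  have upperPolar_eq_lowerPolar (t : Set α) : upperPolar r t = lowerPolar r t := by
    rw [← upperPolar_swap, Std.Symm.swap_eq]
  simpa only [upperPolar_eq_lowerPolar] using lowerPolar_upperPolar_lowerPolar r s

theorem lowerPolar_setOf_minimal {α β : Type*} [Preorder β] [WellFoundedLT β]
    {r : α → β → Prop} (hr : ∀ x, Monotone (r x)) (t : Set β) :
    lowerPolar r {y | Minimal (· ∈ t) y} = lowerPolar r t := by
  refine Set.Subset.antisymm (fun x hx y hy ↦ ?_) (lowerPolar_anti r fun y hy ↦ hy.prop)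
  obtain ⟨z, hzy, hz⟩ := exists_minimal_le_of_wellFoundedLT (· ∈ t) y hy
  exact hr x hzy (hx hz)

/-- The relation `Λ(x) ∩ Λ(y) ≠ ∅`. The blocker of `A` consists of the minimal elements of
`lowerPolar SharesAtom A`, written `N A` above. -/
def SharesAtom {P : Type*} [Preorder P] [OrderBot P] (x y : P) : Prop :=
  ∃ l : P, IsAtom l ∧ l ≤ x ∧ l ≤ y

namespace SharesAtom

variable {P : Type*} [Preorder P] [OrderBot P]

instance instSymm : Std.Symm (SharesAtom (P := P)) where
  symm _ _ := fun ⟨l, hl, hlx, hly⟩ ↦ ⟨l, hl, hly, hlx⟩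

theorem monotone_right (x : P) : Monotone (SharesAtom x) :=
  fun _ _ hyz ⟨l, hl, hlx, hly⟩ ↦ ⟨l, hl, hlx, hly.trans hyz⟩

end SharesAtom

section Blocker

variable {P : Type*} [PartialOrder P] [OrderBot P]

theorem blocker_eq_setOf_minimal (A : Set P) :
    blocker A = {x | Minimal (· ∈ lowerPolar SharesAtom A) x} := by
  ext x
  simp only [Set.mem_ofPred_eq, minimal_mem_iff, eq_comm (a := x)]
  rfl

theorem lowerPolar_sharesAtom_blocker [WellFoundedLT P] (A : Set P) :
    lowerPolar SharesAtom (blocker A) = lowerPolar SharesAtom (lowerPolar SharesAtom A) := by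
  rw [blocker_eq_setOf_minimal, lowerPolar_setOf_minimal SharesAtom.monotone_right]

theorem blocker_blocker_blocker_general [WellFoundedLT P] (A : Set P) :
    blocker (blocker (blocker A)) = blocker A := by
  have lowerPolar_eq :
      lowerPolar SharesAtom (blocker (blocker A)) = lowerPolar SharesAtom A := by
    rw [lowerPolar_sharesAtom_blocker, lowerPolar_sharesAtom_blocker,
      lowerPolar_lowerPolar_lowerPolar]
  rw [blocker_eq_setOf_minimal (blocker (blocker A)), lowerPolar_eq, ← blocker_eq_setOf_minimal]

end Blocker

/-- Lemma 2.3(3): `A*** = A*`. -/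
theorem blocker_blocker_blocker {P : Type*} [PartialOrder P] [BoundedOrder P] [Fintype P]
    (A : Set P) (hA : IsAnti A) :
    blocker (blocker (blocker A)) = blocker A :=
  blocker_blocker_blocker_general A
end

section
/- Let V be a finite set, and let P be an induced subposet of the Boolean lattice 2^V (ordered by inclusion) such that ∅, V, and all singletons belong to P. Then, for two antichains A, B ⊆ P, one has B = A* if and only if the following holds: for all U ∈ P, the complement V \ U contains no member of A if and only if U contains a member of B. -/
/-- The blocker of a family `A` inside the subposet of the Boolean lattice `2^V`
induced by `S ⊆ 2^V` (the members of `S` ordered by inclusion).  Since `S` contains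
all singletons, the atoms of this subposet below an element `x` correspond to the
points of `x`, and the blocker condition `Λ(x) ∩ Λ(a) ≠ ∅` becomes `x ∩ a ≠ ∅`;
the blocker consists of the minimal such elements of `S`. -/
def subBlocker {V : Type*} (S : Set (Set V)) (A : Set (Set V)) : Set (Set V) :=
  {x | (x ∈ S ∧ ∀ a ∈ A, (x ∩ a).Nonempty) ∧
    ∀ y : Set V, (y ∈ S ∧ ∀ a ∈ A, (y ∩ a).Nonempty) → y ⊆ x → y = x}

/-!
The members of `S` meeting every member of `A` are the trace on `S` of an upper set `T`, and
`V \ U` contains no member of `A` exactly when `U ∈ T`. The condition on complements therefore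
says that `S ∩ T` is generated upwards, within `S`, by `B`. A well-founded set is generated upwards
by its minimal elements, and they form the only antichain inside it that does so.
-/

section Order

variable {α : Type*} {S T B : Set α}

theorem forall_mem_iff_exists_le_iff_of_isUpperSet [Preorder α] (hT : IsUpperSet T)
    (hBS : B ⊆ S) :
    (∀ x ∈ S, x ∈ T ↔ ∃ b ∈ B, b ≤ x) ↔ B ⊆ S ∩ T ∧ ∀ x ∈ S ∩ T, ∃ b ∈ B, b ≤ x where
  mp h := ⟨fun b hb ↦ ⟨hBS hb, (h b (hBS hb)).2 ⟨b, hb, le_rfl⟩⟩, fun x hx ↦ (h x hx.1).1 hx.2⟩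
  mpr := fun ⟨hBT, hgen⟩ x hx ↦
    ⟨fun hxT ↦ hgen x ⟨hx, hxT⟩, fun ⟨_, hb, hbx⟩ ↦ hT hbx (hBT hb).2⟩

theorem exists_minimal_le_of_isWF [Preorder α] (hT : T.IsWF) {x : α} (hx : x ∈ T) :
    ∃ m, m ≤ x ∧ Minimal (· ∈ T) m := by
  obtain ⟨m, hm⟩ := (hT.mono Set.inter_subset_left).exists_minimal (s := T ∩ Set.Iic x)
    ⟨x, hx, le_rfl⟩
  exact ⟨m, hm.prop.2, hm.prop.1, fun y hy hym ↦ hm.le_of_le ⟨hy, hym.trans hm.prop.2⟩ hym⟩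

theorem eq_setOfPred_minimal_iff_of_isAntichain [PartialOrder α] (hT : T.IsWF)
    (hB : IsAntichain (· ≤ ·) B) :
    B = {x | Minimal (· ∈ T) x} ↔ B ⊆ T ∧ ∀ x ∈ T, ∃ b ∈ B, b ≤ x := by
  constructor
  · rintro rfl
    refine ⟨fun _ hx ↦ hx.prop, fun x hx ↦ ?_⟩
    obtain ⟨m, hmx, hm⟩ := exists_minimal_le_of_isWF hT hx
    exact ⟨m, hm, hmx⟩
  · rintro ⟨hBT, hgen⟩
    ext x
    have hminimal : Minimal (· ∈ T) x ↔ Minimal (· ∈ B) x :=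
      minimal_iff_minimal_of_imp_of_forall hBT fun y hy ↦
        let ⟨b, hb, hby⟩ := hgen y hy
        ⟨b, hby, hb⟩
    exact (hminimal.trans hB.minimal_mem_iff).symm

end Order

section Transversals

variable {V : Type*}

/-- The transversals of a family `A` of sets: all sets, not only the minimal ones or those of some
subposet, that meet every member of `A`. The blocker of `A` in `S` consists of the minimal elements
of `S ∩ transversals A`. -/
def transversals (A : Set (Set V)) : Set (Set V) :=
  {U | ∀ a ∈ A, (U ∩ a).Nonempty}

theorem isUpperSet_transversals (A : Set (Set V)) : IsUpperSet (transversals A) :=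
  fun _ _ hUW hU a ha ↦ (hU a ha).mono (Set.inter_subset_inter_left a hUW)

theorem mem_transversals_iff_forall_not_subset_compl {A : Set (Set V)} {U : Set V} :
    U ∈ transversals A ↔ ∀ a ∈ A, ¬ a ⊆ Uᶜ :=
  forall₂_congr fun _ _ ↦ by
    rw [Set.subset_compl_iff_disjoint_left, Set.not_disjoint_iff_nonempty_inter]

theorem subBlocker_eq_setOfPred_minimal (S A : Set (Set V)) :
    subBlocker S A = {x | Minimal (· ∈ S ∩ transversals A) x} :=
  Set.ext fun _ ↦
    ⟨fun h ↦ ⟨h.1, fun y hy hyx ↦ (h.2 y hy hyx).ge⟩,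
      fun h ↦ ⟨h.prop, fun _ hy hyx ↦ h.eq_of_subset hy hyx⟩⟩

end Transversals

theorem subBlocker_iff_propertyC_general {V : Type*} (S : Set (Set V)) (hS : S.IsWF)
    (A B : Set (Set V)) (hBS : B ⊆ S) (hB : IsAntichain (· ⊆ ·) B) :
    B = subBlocker S A ↔
      ∀ U ∈ S, (∀ a ∈ A, ¬ a ⊆ Uᶜ) ↔ ∃ b ∈ B, b ⊆ U := by
  simp only [← mem_transversals_iff_forall_not_subset_compl]
  calc
    B = subBlocker S A ↔ B = {x | Minimal (· ∈ S ∩ transversals A) x} := by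
      rw [subBlocker_eq_setOfPred_minimal]
    _ ↔ B ⊆ S ∩ transversals A ∧ ∀ U ∈ S ∩ transversals A, ∃ b ∈ B, b ≤ U :=
      eq_setOfPred_minimal_iff_of_isAntichain (hS.mono Set.inter_subset_left) hB
    _ ↔ ∀ U ∈ S, U ∈ transversals A ↔ ∃ b ∈ B, b ⊆ U :=
      (forall_mem_iff_exists_le_iff_of_isUpperSet (isUpperSet_transversals A) hBS).symm

/-- Lemma 2.2: in an induced subposet `S` of `2^V` containing `∅`, `V` and all
singletons, an antichain `B` equals the blocker `A*` of an antichain `A` if and only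
if for all `U ∈ S`: the complement `V \ U` contains no member of `A` iff `U` contains
a member of `B`. -/
theorem subBlocker_iff_propertyC {V : Type*} [Fintype V] (S : Set (Set V))
    (hempty : ∅ ∈ S) (huniv : Set.univ ∈ S) (hsing : ∀ v : V, {v} ∈ S)
    (A B : Set (Set V)) (hAS : A ⊆ S) (hBS : B ⊆ S)
    (hA : A.Nonempty ∧ ∅ ∉ A ∧ IsAntichain (· ⊆ ·) A)
    (hB : B.Nonempty ∧ ∅ ∉ B ∧ IsAntichain (· ⊆ ·) B) :
    B = subBlocker S A ↔
      ∀ U ∈ S, (∀ a ∈ A, ¬ a ⊆ Uᶜ) ↔ ∃ b ∈ B, b ⊆ U :=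
  subBlocker_iff_propertyC_general S S.toFinite.isWF A B hBS hB.2.2
end

section
/- Let V be a finite set and let P be a well-complemented subposet of the Boolean lattice 2^V, i.e. a subfamily S ⊆ 2^V ordered by inclusion such that ∅ and all singletons belong to S and S is closed under taking complements in V. Then A** = A for every antichain A in P, where * denotes the blocker operation. -/
/-!
A member `x` of `S` fails to meet some member of `A*` exactly when its complement contains a member
of `A*`, i.e. when its complement is a transversal of `A` (every transversal contains a minimal
one), i.e. when `x` contains no member of `A`. So the transversals of `A*` are the members of `S`
lying above `A`, and the minimal ones among them are the members of the antichain `A`.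
-/

section

open Set

theorem exists_le_minimal_of_isWF {α : Type*} [Preorder α] {s : Set α} (hs : s.IsWF) {a : α}
    (ha : a ∈ s) : ∃ b ≤ a, Minimal (· ∈ s) b := by
  have hwf : (s ∩ Iic a).IsWF := hs.mono inter_subset_left
  have hne : (s ∩ Iic a).Nonempty := ⟨a, ha, le_rfl⟩
  obtain ⟨hbs, hba⟩ := hwf.min_mem hne
  refine ⟨hwf.min hne, hba, minimal_iff_forall_lt.2 ⟨hbs, fun c hcb hcs => ?_⟩⟩
  exact hwf.not_lt_min hne ⟨hcs, hcb.le.trans hba⟩ hcb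

theorem setOfPred_minimal_inter_upperClosure {α : Type*} [PartialOrder α] {s t : Set α}
    (ht : IsAntichain (· ≤ ·) t) (hts : t ⊆ s) :
    {x | Minimal (· ∈ s ∩ upperClosure t) x} = t := by
  ext x
  have hle : ∀ ⦃y⦄, y ∈ s ∩ upperClosure t → ∃ a, a ≤ y ∧ a ∈ t := fun y hy =>
    (mem_upperClosure.1 hy.2).imp fun _ => And.symm
  exact (minimal_iff_minimal_of_imp_of_forall (fun a ha => ⟨hts ha, subset_upperClosure ha⟩)
    hle).trans ht.minimal_mem_iff

variable {V : Type*} {S A : Set (Set V)} {x : Set V}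

/-- The transversals of `A` in `S`: the members of `S` that meet every member of `A`. The blocker
of `A` consists of the minimal ones. -/
def subTransversals (S A : Set (Set V)) : Set (Set V) :=
  {x | x ∈ S ∧ ∀ a ∈ A, (x ∩ a).Nonempty}

theorem subBlocker_eq_setOfPred_minimal_subTransversals (S A : Set (Set V)) :
    subBlocker S A = {x | Minimal (· ∈ subTransversals S A) x} := by
  ext x
  simp only [subBlocker, subTransversals, mem_ofPred_eq, minimal_iff, eq_comm]

theorem exists_mem_subBlocker_subset (hS : S.IsWF) (hx : x ∈ subTransversals S A) :
    ∃ b ∈ subBlocker S A, b ⊆ x := by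
  have hwf : (subTransversals S A).IsWF := hS.mono fun _ => And.left
  obtain ⟨b, hbx, hb⟩ := exists_le_minimal_of_isWF hwf hx
  exact ⟨b, subBlocker_eq_setOfPred_minimal_subTransversals S A ▸ hb, hbx⟩

theorem compl_mem_subTransversals_iff (hx : xᶜ ∈ S) :
    xᶜ ∈ subTransversals S A ↔ x ∉ upperClosure A := by
  simp only [subTransversals, mem_ofPred_eq, hx, true_and, inter_comm xᶜ, inter_compl_nonempty_iff,
    mem_upperClosure, not_exists, not_and]

theorem inter_upperClosure_subset_subTransversals_subBlocker (S A : Set (Set V)) :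
    S ∩ upperClosure A ⊆ subTransversals S (subBlocker S A) := by
  rintro x ⟨hxS, a, haA, hax⟩
  refine ⟨hxS, fun b hb => ?_⟩
  obtain ⟨v, hvb, hva⟩ := hb.1.2 a haA
  exact ⟨v, hax hva, hvb⟩

theorem subTransversals_subBlocker (hS : S.IsWF) (hcompl : ∀ U ∈ S, Uᶜ ∈ S) :
    subTransversals S (subBlocker S A) = S ∩ upperClosure A := by
  refine Subset.antisymm (fun x hx => ⟨hx.1, ?_⟩)
    (inter_upperClosure_subset_subTransversals_subBlocker S A)
  by_contra hxA
  have hxc : xᶜ ∈ subTransversals S A := (compl_mem_subTransversals_iff (hcompl x hx.1)).2 hxA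
  obtain ⟨b, hb, hbx⟩ := exists_mem_subBlocker_subset hS hxc
  exact (hx.2 b hb).not_disjoint (subset_compl_iff_disjoint_left.1 hbx)

end

theorem wellComplemented_blocker_blocker_general {V : Type*} {S A : Set (Set V)} (hS : S.IsWF)
    (hcompl : ∀ U ∈ S, Uᶜ ∈ S) (hAS : A ⊆ S) (hA : IsAntichain (· ⊆ ·) A) :
    subBlocker S (subBlocker S A) = A := by
  rw [subBlocker_eq_setOfPred_minimal_subTransversals, subTransversals_subBlocker hS hcompl]
  exact setOfPred_minimal_inter_upperClosure hA hAS

/-- In a well-complemented subposet of a Boolean lattice (a family `S ⊆ 2^V`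
containing `∅` and all singletons and closed under complementation), every
antichain satisfies `A** = A`. -/
theorem wellComplemented_blocker_blocker {V : Type*} [Fintype V] (S : Set (Set V))
    (hempty : ∅ ∈ S) (hsing : ∀ v : V, {v} ∈ S) (hcompl : ∀ U ∈ S, Uᶜ ∈ S)
    (A : Set (Set V)) (hAS : A ⊆ S)
    (hA : A.Nonempty ∧ ∅ ∉ A ∧ IsAntichain (· ⊆ ·) A) :
    subBlocker S (subBlocker S A) = A :=
  wellComplemented_blocker_blocker_general S.toFinite.isWF hcompl hAS hA.2.2
end

section
/- Let A ⊆ P_n be an antichain in the refinement order Ref(n) on number partitions of n. Then in the partition lattice Π_n one has fi(A)* = fi(B), where B is the set of refinement-minimal elements of P_n \ (⋃_{λ ∈ A} { μ ∈ P_n : μ ≤ λ' in dominance order }); i.e. B consists of the refinement-minimal number partitions among those not dominated by any conjugate λ' with λ ∈ A. -/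
open Finset

/-- The partition lattice `Π_n`: set partitions of `{1,…,n}`, ordered by refinement. -/
abbrev SetPart (n : ℕ) := Finpartition (univ : Finset (Fin n))

/-- The shape of a set partition: the number partition formed by its block sizes. -/
def shape {n : ℕ} (σ : SetPart n) : Nat.Partition n where
  parts := σ.parts.val.map Finset.card
  parts_pos := by
    intro i hi
    simp only [Multiset.mem_map, Finset.mem_val] at hi
    obtain ⟨p, hp, rfl⟩ := hi
    exact Finset.card_pos.mpr (σ.nonempty_of_mem_parts hp)
  parts_sum := by
    have h := σ.sum_card_parts
    rw [Finset.sum] at h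
    rw [h, card_univ, Fintype.card_fin]

/-- The fiber under the shape map of a set `S` of number partitions: all set
partitions whose shape lies in `S`. -/
def fi {n : ℕ} (S : Set (Nat.Partition n)) : Set (SetPart n) :=
  {σ | shape σ ∈ S}

/-- The sum of the `k` largest parts of a number partition. -/
def topSum {n : ℕ} (μ : Nat.Partition n) (k : ℕ) : ℕ :=
  (((μ.parts.sort (· ≤ ·)).reverse).take k).sum

/-- The `i+1`-st part of the conjugate (transpose) partition `λ'` of `λ`:
the number of parts of `λ` that are at least `i+1`. -/
def conjPart {n : ℕ} (lam : Nat.Partition n) (i : ℕ) : ℕ :=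
  (lam.parts.filter (fun p => i + 1 ≤ p)).card

/-- `μ ≤ λ'` in the dominance order `Dom(n)`, where `λ'` is the conjugate of `λ`:
for every `k`, the sum of the `k` largest parts of `μ` is at most
`λ'_1 + ⋯ + λ'_k` (the parts of the conjugate being arranged decreasingly). -/
def DomLEConj {n : ℕ} (μ lam : Nat.Partition n) : Prop :=
  ∀ k, topSum μ k ≤ ∑ i ∈ Finset.range k, conjPart lam i

/-- The refinement order `Ref(n)` on partitions of `n`: `μ ≤ ν` iff `μ` can be
obtained from `ν` by partitioning the parts of `ν`. -/
def RefLE {n : ℕ} (μ ν : Nat.Partition n) : Prop :=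
  ∃ g : Multiset (Multiset ℕ), g.map Multiset.sum = ν.parts ∧ g.sum = μ.parts

/-- The partition of `n` into `n` parts equal to `1`; this is the bottom element of
both the refinement order and the dominance order on partitions of `n`. -/
def onesPart (n : ℕ) : Nat.Partition n where
  parts := Multiset.replicate n 1
  parts_pos := by
    intro i hi
    rw [Multiset.eq_of_mem_replicate hi]
    exact one_pos
  parts_sum := by simp

/-! Every element except the bottom lies above an atom, so `x` and `a` share an atom iff they are
not disjoint in `Π_n`; and they are disjoint iff every block of `x` meets every block of `a` in at
most one point. Which pairs of shapes admit such `x` and `a` is the Gale–Ryser problem: the shape of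
`x` is dominated by the conjugate of the shape of `a` iff every set `T` of blocks of `x` satisfies
`∑ b ∈ T, #b ≤ ∑ c ∈ a.parts, min #T #c`. This is necessary for disjointness by double counting.
Conversely, it lets one distribute the blocks of `x` one at a time, each over the columns with the
most room left, so as to fill columns of the sizes of the blocks of `a`; the columns then form a
partition of the shape of `a` disjoint from `x`. Hence `x` shares an atom with every element of
`fi A` iff its shape is not dominated by any `λ'` with `λ ∈ A`. Finally, every refinement of the
shape of `x` is the shape of some `y ≤ x`, and `y = x` as soon as the shapes agree, so minimality in
`Π_n` and in `Ref(n)` coincide for this condition. -/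

theorem sum_le_sum_take_of_sublist {M : Type*} [AddCommMonoid M] [PartialOrder M]
    [IsOrderedAddMonoid M] {l l' : List M} (hl : l.Pairwise (· ≥ ·)) (h : l'.Sublist l) :
    l'.sum ≤ (l.take l'.length).sum := by
  induction l generalizing l' with
  | nil => simp [List.sublist_nil.1 h]
  | cons a l ih =>
    cases l' with
    | nil => simp
    | cons b l' =>
      have hba : b ≤ a := by
        rcases List.mem_cons.1 (h.subset List.mem_cons_self) with rfl | hb
        · exact le_rfl
        · exact List.rel_of_pairwise_cons hl hb
      simpa using add_le_add hba (ih hl.of_cons h.tail)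

theorem exists_le_map_eq_of_le_map {α β : Type*} {f : α → β} {s : Multiset α} {t : Multiset β}
    (h : t ≤ s.map f) : ∃ u ≤ s, u.map f = t := by
  induction s, t using Quotient.inductionOn₂ with
  | h l l' =>
    obtain ⟨l'', hperm, hsub⟩ := Multiset.coe_le.1 h
    obtain ⟨m, hm, rfl⟩ := List.sublist_map_iff.1 hsub
    exact ⟨m, Multiset.coe_le.2 hm.subperm, Multiset.coe_eq_coe.2 hperm⟩

theorem exists_map_eq_of_map_eq_map {α β γ : Type*} [Nonempty β] {f : β → γ} {c : α → γ}
    (s : Finset α) {t : Multiset β} (h : t.map f = s.val.map c) :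
    ∃ g : α → β, t = s.val.map g ∧ ∀ a ∈ s, f (g a) = c a := by
  classical
  induction s using Finset.induction_on generalizing t with
  | empty => exact ⟨fun _ => Classical.arbitrary β, by simpa using h, by simp⟩
  | insert a s ha ih =>
    rw [insert_val_of_notMem ha, Multiset.map_cons] at h
    obtain ⟨b, hb, hbc, hrest⟩ := (Multiset.map_eq_cons _ _ _ _).2 h
    obtain ⟨g, hg, hgc⟩ := ih hrest
    have hne : ∀ a' ∈ s, a' ≠ a := fun a' ha' => ne_of_mem_of_not_mem ha' ha
    refine ⟨Function.update g a b, ?_, ?_⟩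
    · rw [insert_val_of_notMem ha, Multiset.map_cons, Function.update_self,
        ← Multiset.cons_erase hb, hg]
      congr 1
      exact Multiset.map_congr rfl fun a' ha' => (Function.update_of_ne (hne a' ha') _ _).symm
    · rw [forall_mem_insert, Function.update_self]
      exact ⟨hbc, fun a' ha' => by rw [Function.update_of_ne (hne a' ha'), hgc a' ha']⟩

section Dominance

variable {n : ℕ}

theorem sum_le_topSum {μ : Nat.Partition n} {M : Multiset ℕ} (h : M ≤ μ.parts) :
    M.sum ≤ topSum μ M.card := by
  induction M using Quotient.inductionOn with
  | h l =>
    rw [← Multiset.sort_eq μ.parts (· ≤ ·), ← Multiset.coe_reverse] at h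
    obtain ⟨l', hperm, hsub⟩ := Multiset.coe_le.1 h
    have hsorted : (μ.parts.sort (· ≤ ·)).reverse.Pairwise (· ≥ ·) :=
      List.pairwise_reverse.2 (Multiset.pairwise_sort _ _)
    simpa [topSum, hperm.sum_eq, hperm.length_eq] using sum_le_sum_take_of_sublist hsorted hsub

theorem exists_le_parts_sum_eq_topSum (μ : Nat.Partition n) (k : ℕ) :
    ∃ M ≤ μ.parts, M.card ≤ k ∧ M.sum = topSum μ k := by
  refine ⟨((μ.parts.sort (· ≤ ·)).reverse.take k : List ℕ), ?_, ?_, rfl⟩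
  · conv_rhs => rw [← Multiset.sort_eq μ.parts (· ≤ ·), ← Multiset.coe_reverse]
    exact Multiset.coe_le.2 (List.take_sublist _ _).subperm
  · exact List.length_take_le _ _

theorem sum_range_conjPart (lam : Nat.Partition n) (k : ℕ) :
    ∑ i ∈ range k, conjPart lam i = (lam.parts.map (min k)).sum := by
  simp only [conjPart, ← Multiset.countP_eq_card_filter]
  induction lam.parts using Multiset.induction with
  | empty => simp
  | cons p M ih =>
    have hp : ∑ i ∈ range k, (if i + 1 ≤ p then 1 else 0) = min k p := by
      rw [sum_boole, Nat.cast_id, ← card_range (min k p)]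
      congr 1
      ext i
      simp
    simp only [Multiset.countP_cons, sum_add_distrib, ih, hp, Multiset.map_cons,
      Multiset.sum_cons, add_comm]

theorem domLEConj_iff {μ lam : Nat.Partition n} :
    DomLEConj μ lam ↔ ∀ M ≤ μ.parts, M.sum ≤ (lam.parts.map (min M.card)).sum := by
  simp only [DomLEConj, sum_range_conjPart]
  constructor
  · exact fun h M hM => (sum_le_topSum hM).trans (h _)
  · intro h k
    obtain ⟨M, hM, hMk, hsum⟩ := exists_le_parts_sum_eq_topSum μ k
    rw [← hsum]
    exact (h M hM).trans
      (Multiset.sum_map_le_sum_map _ _ fun p _ => min_le_min_right p hMk)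

theorem domLEConj_shape_iff {x a : SetPart n} :
    DomLEConj (shape x) (shape a) ↔
      ∀ T ⊆ x.parts, ∑ b ∈ T, #b ≤ ∑ c ∈ a.parts, min #T #c := by
  rw [domLEConj_iff]
  constructor
  · intro h T hT
    simpa [shape] using! h (T.val.map card) (Multiset.map_le_map (val_le_iff.2 hT))
  · intro h M hM
    obtain ⟨t, ht, rfl⟩ := exists_le_map_eq_of_le_map hM
    simpa [shape] using! h ⟨t, Multiset.nodup_of_le ht x.parts.nodup⟩ (val_le_iff.1 ht)

end Dominance

theorem not_disjoint_iff_exists_isAtom {P : Type*} [PartialOrder P] [OrderBot P] [IsAtomic P]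
    {x y : P} : ¬ Disjoint x y ↔ ∃ l, IsAtom l ∧ l ≤ x ∧ l ≤ y := by
  constructor
  · intro h
    obtain ⟨z, hzx, hzy, hz⟩ : ∃ z, z ≤ x ∧ z ≤ y ∧ ¬ z ≤ ⊥ := by
      simpa [Disjoint] using h
    obtain ⟨l, hl, hlz⟩ := (eq_bot_or_exists_atom_le z).resolve_left (mt le_bot_iff.2 hz)
    exact ⟨l, hl, hlz.trans hzx, hlz.trans hzy⟩
  · rintro ⟨l, hl, hlx, hly⟩ h
    exact hl.1 (le_bot_iff.1 (h hlx hly))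

section Disjointness

variable {α : Type*} [DecidableEq α] {s : Finset α} {P Q : Finpartition s}

theorem finpartition_disjoint_iff_card_inter_le_one :
    Disjoint P Q ↔ ∀ b ∈ P.parts, ∀ c ∈ Q.parts, #(b ∩ c) ≤ 1 := by
  have hparts {t : Finset α} :
      t ∈ (P ⊓ Q).parts ↔ t ≠ ∅ ∧ ∃ b ∈ P.parts, ∃ c ∈ Q.parts, b ∩ c = t := by
    simp [Finpartition.parts_inf, and_assoc]
  rw [disjoint_iff_inf_le]
  constructor
  · intro h b hb c hc
    rcases (b ∩ c).eq_empty_or_nonempty with hbc | hbc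
    · simp [hbc]
    · obtain ⟨t, ht, hle⟩ := h (hparts.2 ⟨hbc.ne_empty, b, hb, c, hc, rfl⟩)
      obtain ⟨v, -, rfl⟩ := Finpartition.mem_bot_iff.1 ht
      exact card_le_card hle
  · intro h t ht
    obtain ⟨hne, b, hb, c, hc, rfl⟩ := hparts.1 ht
    have hcard : #(b ∩ c) = 1 :=
      (h b hb c hc).antisymm (card_pos.2 (nonempty_iff_ne_empty.2 hne))
    obtain ⟨v, hv⟩ := card_eq_one.1 hcard
    have hvs : v ∈ s := P.subset hb (mem_inter.1 (hv ▸ mem_singleton_self v)).1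
    exact ⟨{v}, Finpartition.mem_bot_iff.2 ⟨v, hvs, rfl⟩, hv.le⟩

theorem sum_card_inter_parts (P : Finpartition s) {t : Finset α} (ht : t ⊆ s) :
    ∑ b ∈ P.parts, #(b ∩ t) = #t :=
  (P.sum_restrict ht card card_empty).symm.trans (P.restrict ht).sum_card_parts

theorem sum_card_le_sum_min_of_disjoint (h : Disjoint P Q) {T : Finset (Finset α)}
    (hT : T ⊆ P.parts) : ∑ b ∈ T, #b ≤ ∑ c ∈ Q.parts, min #T #c :=
  calc ∑ b ∈ T, #b = ∑ b ∈ T, ∑ c ∈ Q.parts, #(b ∩ c) :=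
        sum_congr rfl fun b hb => by
          simp_rw [inter_comm b, sum_card_inter_parts Q (P.subset (hT hb))]
    _ = ∑ c ∈ Q.parts, ∑ b ∈ T, #(b ∩ c) := sum_comm
    _ ≤ ∑ c ∈ Q.parts, min #T #c := sum_le_sum fun c hc => le_min
        (sum_le_card_nsmul T _ 1 (fun b hb =>
          finpartition_disjoint_iff_card_inter_le_one.1 h b (hT hb) c hc) |>.trans (by simp))
        ((sum_le_sum_of_subset hT).trans (sum_card_inter_parts P (Q.subset hc)).le)

end Disjointness

section GaleRyser

variable {κ : Type*} [DecidableEq κ] {C : Finset κ}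

theorem exists_subset_card_eq_forall_le {β : Type*} [LinearOrder β] (c : κ → β) {k : ℕ}
    (hk : k ≤ #C) : ∃ R ⊆ C, #R = k ∧ ∀ i ∈ R, ∀ j ∈ C \ R, c j ≤ c i := by
  induction k with
  | zero => exact ⟨∅, by simp⟩
  | succ k ih =>
    obtain ⟨R, hRC, rfl, hR⟩ := ih (by omega)
    obtain ⟨m, hm, hmax⟩ := (C \ R).exists_max_image c
      (sdiff_nonempty.2 fun hCR => by have := card_le_card hCR; omega)
    obtain ⟨hmC, hmR⟩ := mem_sdiff.1 hm
    refine ⟨insert m R, insert_subset hmC hRC, card_insert_of_notMem hmR, ?_⟩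
    have hsub : C \ insert m R ⊆ C \ R := sdiff_subset_sdiff Subset.rfl (subset_insert m R)
    exact forall_mem_insert _ _ _ |>.2
      ⟨fun j hj => hmax j (hsub hj), fun i hi j hj => hR i hi j (hsub hj)⟩

theorem le_sum_min_tsub_of_forall_le {c : κ → ℕ} {R : Finset κ} (hRC : R ⊆ C)
    (hpos : ∀ i ∈ R, 0 < c i) (hR : ∀ i ∈ R, ∀ j ∈ C \ R, c j ≤ c i) {k m : ℕ}
    (hk : m ≤ ∑ j ∈ C, min k (c j)) (hk' : m + #R ≤ ∑ j ∈ C, min (k + 1) (c j)) :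
    m ≤ ∑ j ∈ C, min k (c j - if j ∈ R then 1 else 0) := by
  -- If some column outside `R` has length over `k`, so does every column in `R`, and truncating at
  -- `k` hides the removed units.
  by_cases hlong : ∃ j ∈ C \ R, k < c j
  · obtain ⟨j₀, hj₀, hkj₀⟩ := hlong
    refine hk.trans_eq (sum_congr rfl fun j _ => ?_)
    split_ifs with hj
    · have := hR j hj j₀ hj₀
      omega
    · simp
  -- Otherwise columns outside `R` do not feel the truncation drop from `k + 1` to `k`, and that
  -- drop together with the removed unit costs each column in `R` exactly one.
  · push Not at hlong
    have hterm : ∀ j ∈ C, min (k + 1) (c j) =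
        min k (c j - if j ∈ R then 1 else 0) + if j ∈ R then 1 else 0 := by
      intro j hj
      split_ifs with hjR
      · have := hpos j hjR
        omega
      · have := hlong j (mem_sdiff.2 ⟨hj, hjR⟩)
        omega
    rw [sum_congr rfl hterm, sum_add_distrib, sum_boole, Nat.cast_id, filter_mem_eq_inter,
      inter_eq_right.2 hRC] at hk'
    omega

theorem exists_subset_forall_pos_and_forall_le {c : κ → ℕ} {k : ℕ}
    (hk : k ≤ ∑ j ∈ C, min 1 (c j)) :
    ∃ R ⊆ C, #R = k ∧ (∀ i ∈ R, 0 < c i) ∧ ∀ i ∈ R, ∀ j ∈ C \ R, c j ≤ c i := by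
  have hcard : ∑ j ∈ C, min 1 (c j) = #{j ∈ C | 0 < c j} := by
    rw [card_filter]
    exact sum_congr rfl fun j _ => by split_ifs <;> omega
  obtain ⟨R, hRC, hRk, hR⟩ := exists_subset_card_eq_forall_le c (hk.trans_eq hcard)
  refine ⟨R, hRC.trans (filter_subset _ _), hRk, fun i hi => (mem_filter.1 (hRC hi)).2, ?_⟩
  intro i hi j hj
  rcases (c j).eq_zero_or_pos with hj0 | hj0
  · omega
  · exact hR i hi j (by simp_all)

theorem exists_card_eq_card_fiber_le {ι : Type*} {I : Finset ι} {m : ι → ℕ} {c : κ → ℕ}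
    (h : ∀ T ⊆ I, ∑ i ∈ T, m i ≤ ∑ j ∈ C, min #T (c j)) :
    ∃ R : ι → Finset κ, (∀ i ∈ I, R i ⊆ C ∧ #(R i) = m i) ∧ ∀ j ∈ C, #{i ∈ I | j ∈ R i} ≤ c j := by
  classical
  induction I using Finset.induction_on generalizing c with
  | empty => exact ⟨fun _ => ∅, by simp⟩
  | insert i I hi ih =>
    -- Greedy choice: row `i` gets the `m i` longest columns.
    obtain ⟨R₀, hR₀C, hR₀m, hpos, hlargest⟩ :=
      exists_subset_forall_pos_and_forall_le (by simpa using h {i} (by simp))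
    obtain ⟨R, hR, hRc⟩ := ih (c := fun j => c j - if j ∈ R₀ then 1 else 0) fun T hT => by
      have hiT : i ∉ T := fun hiT => hi (hT hiT)
      refine le_sum_min_tsub_of_forall_le hR₀C hpos hlargest (h T (hT.trans (subset_insert i I))) ?_
      simpa [hiT, hR₀m, add_comm] using h (insert i T) (insert_subset_insert i hT)
    have hupdate : ∀ i' ∈ I, Function.update R i R₀ i' = R i' := fun i' hi' =>
      Function.update_of_ne (ne_of_mem_of_not_mem hi' hi) _ _
    refine ⟨Function.update R i R₀, (forall_mem_insert _ _ _).2 ⟨?_, fun i' hi' => ?_⟩,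
      fun j hj => ?_⟩
    · simp [hR₀C, hR₀m]
    · simpa [hupdate i' hi'] using hR i' hi'
    · have hold : #{i' ∈ I | j ∈ Function.update R i R₀ i'} ≤ c j - if j ∈ R₀ then 1 else 0 := by
        rw [filter_congr fun i' hi' => by rw [hupdate i' hi']]
        exact hRc j hj
      rw [filter_insert, Function.update_self]
      split_ifs at hold ⊢ with hjR
      · have := hpos j hjR
        exact (card_insert_le _ _).trans (by omega)
      · exact hold

theorem exists_injOn_card_fiber_le [Nonempty κ] {α : Type*} [DecidableEq α] {s : Finset α}
    {P : Finpartition s} {c : κ → ℕ}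
    (h : ∀ T ⊆ P.parts, ∑ b ∈ T, #b ≤ ∑ j ∈ C, min #T (c j)) :
    ∃ f : α → κ, Set.MapsTo f s C ∧ (∀ b ∈ P.parts, Set.InjOn f b) ∧
      ∀ j ∈ C, #{v ∈ s | f v = j} ≤ c j := by
  obtain ⟨R, hR, hRc⟩ := exists_card_eq_card_fiber_le h
  have hinj (b : Finset α) (hb : b ∈ P.parts) :
      ∃ g : α → κ, Set.MapsTo g b (R b) ∧ Set.InjOn g b := by
    have hle : (b : Set α).encard ≤ (R b : Set κ).encard := by
      simp [Set.encard_coe_eq_coe_finsetCard, (hR b hb).2]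
    exact b.finite_toSet.exists_injOn_of_encard_le hle
  choose! g hgR hg using hinj
  have heq : ∀ b ∈ P.parts, Set.EqOn (g b) (fun v => g (P.part v) v) b := fun b hb v hv => by
    simp only [P.part_eq_of_mem hb hv]
  have hmaps : ∀ v ∈ s, g (P.part v) v ∈ R (P.part v) := fun v hv =>
    hgR _ (P.part_mem.2 hv) (P.mem_part_self.2 hv)
  refine ⟨fun v => g (P.part v) v, fun v hv => (hR _ (P.part_mem.2 hv)).1 (hmaps v hv),
    fun b hb => (hg b hb).congr (heq b hb), fun j hj => le_trans ?_ (hRc j hj)⟩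
  refine card_le_card_of_injOn P.part (fun v hv => ?_) fun v hv w hw hvw => ?_
  · obtain ⟨hvs, rfl⟩ := mem_filter.1 hv
    exact mem_coe.2 (mem_filter.2 ⟨P.part_mem.2 hvs, hmaps v hvs⟩)
  · obtain ⟨hvs, hv⟩ := mem_filter.1 hv
    obtain ⟨hws, hw⟩ := mem_filter.1 hw
    refine hg _ (P.part_mem.2 hvs) (P.mem_part_self.2 hvs) (hvw ▸ P.mem_part_self.2 hws) ?_
    exact (hv.trans hw.symm).trans (by simp only [hvw])

end GaleRyser

theorem finpartition_bind_le {α : Type*} [Lattice α] [OrderBot α] [IsModularLattice α]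
    [DecidableEq α] {a : α} (P : Finpartition a) (R : ∀ b ∈ P.parts, Finpartition b) :
    P.bind R ≤ P := by
  intro t ht
  obtain ⟨b, hb, htb⟩ := Finpartition.mem_bind.1 ht
  exact ⟨b, hb, (R b hb).le htb⟩

theorem finpartition_bind_restrict_of_le {α : Type*} [DistribLattice α] [OrderBot α]
    [DecidableEq α] {a : α} {P Q : Finpartition a} (h : Q ≤ P) :
    (P.bind fun _ hb => Q.restrict (P.le hb)) = Q := by
  have hinf {b c d : α} (hb : b ∈ P.parts) (hc : c ∈ P.parts) (hdb : d ≤ b) (hdc : d ⊓ c ≠ ⊥) :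
      d ⊓ c = d := by
    obtain rfl : b = c := by
      by_contra hbc
      exact hdc (((P.disjoint hb hc hbc).mono_left hdb).eq_bot)
    exact inf_eq_left.2 hdb
  ext t
  simp only [Finpartition.mem_bind, Finpartition.restrict, mem_erase, mem_image]
  constructor
  · rintro ⟨c, hc, ht, d, hd, rfl⟩
    obtain ⟨b, hb, hdb⟩ := h hd
    rwa [hinf hb hc hdb ht]
  · intro ht
    obtain ⟨b, hb, htb⟩ := h ht
    exact ⟨b, hb, Q.ne_bot ht, t, ht, inf_eq_left.2 htb⟩

section BlockSizes

variable {α : Type*} [DecidableEq α] {s : Finset α} {P Q : Finpartition s}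

/-- The multiset of block sizes of a partition of a finite set `s`; for `s = univ` in `Fin n` these
are the parts of its `shape`. -/
def blockSizes (P : Finpartition s) : Multiset ℕ :=
  P.parts.val.map card

theorem blockSizes_eq_sum (P : Finpartition s) : blockSizes P = ∑ b ∈ P.parts, {#b} := by
  rw [blockSizes, Finset.sum, ← Multiset.sum_map_singleton (P.parts.val.map card), Multiset.map_map]
  rfl

theorem sum_blockSizes (P : Finpartition s) : (blockSizes P).sum = #s :=
  P.sum_card_parts

theorem blockSizes_bind (P : Finpartition s) (R : ∀ b ∈ P.parts, Finpartition b) :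
    blockSizes (P.bind R) = ∑ b ∈ P.parts.attach, blockSizes (R b b.2) := by
  simp only [blockSizes_eq_sum]
  exact Finpartition.sum_combine _ P.supIndep.attach _

theorem exists_blockSizes_eq {M : Multiset ℕ} (hpos : ∀ i ∈ M, 0 < i) {s : Finset α}
    (hs : M.sum = #s) : ∃ P : Finpartition s, blockSizes P = M := by
  induction M using Multiset.induction generalizing s with
  | empty =>
    obtain rfl : s = ∅ := card_eq_zero.1 hs.symm
    exact ⟨Finpartition.empty _, rfl⟩
  | cons a M ih =>
    rw [Multiset.sum_cons] at hs
    obtain ⟨t, hts, rfl⟩ := exists_subset_card_eq (s := s) (n := a) (by omega)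
    obtain ⟨P, rfl⟩ := ih (fun i hi => hpos i (Multiset.mem_cons_of_mem hi))
      (s := s \ t) (by rw [card_sdiff_of_subset hts]; omega)
    have ht : t.Nonempty := card_pos.1 (hpos _ (Multiset.mem_cons_self _ _))
    have htP : t ∉ P.parts := fun h =>
      ht.ne_empty (disjoint_self.1 (sdiff_disjoint.mono_left (P.subset h)))
    exact ⟨P.extend ht.ne_empty sdiff_disjoint (sdiff_union_of_subset hts), by
      simp [blockSizes, Finpartition.extend, insert_val_of_notMem htP]⟩

theorem finpartition_eq_of_le_of_card_parts_le (h : Q ≤ P) (hcard : #Q.parts ≤ #P.parts) :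
    Q = P := by
  refine h.antisymm fun b hb => ?_
  choose! φ hφ hφb using fun c hc => Finpartition.exists_le_of_le h (b := c) hc
  have hinj : Set.InjOn φ P.parts := fun c hc d hd hcd => by
    obtain ⟨v, hv⟩ := Q.nonempty_of_mem_parts (hφ c hc)
    exact P.eq_of_mem_parts hc hd (hφb c hc hv) (hφb d hd (hcd ▸ hv))
  have hsurj : Set.SurjOn φ P.parts Q.parts := surjOn_of_injOn_of_card_le φ hφ hinj hcard
  refine ⟨φ b, hφ b hb, fun v hv => ?_⟩
  obtain ⟨c, hc, hvc⟩ := Q.exists_mem (P.subset hb hv)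
  obtain ⟨d, hd, rfl⟩ := hsurj hc
  obtain rfl := P.eq_of_mem_parts hd hb (hφb d hd hvc) hv
  exact hvc

theorem parts_ofSetSetoid_ker {κ : Type*} [DecidableEq κ] (s : Finset α) (f : α → κ) :
    (Finpartition.ofSetSetoid (Setoid.ker f) s).parts =
      (s.image f).image fun j => {v ∈ s | f v = j} := by
  simp [Finpartition.ofSetSetoid_parts, image_image, Function.comp_def, Setoid.ker_def, eq_comm]

theorem blockSizes_ofSetSetoid_ker {κ : Type*} [DecidableEq κ] (s : Finset α) (f : α → κ) :
    blockSizes (Finpartition.ofSetSetoid (Setoid.ker f) s) =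
      (s.image f).val.map fun j => #{v ∈ s | f v = j} := by
  rw [blockSizes, parts_ofSetSetoid_ker, image_val_of_injOn, Multiset.map_map]
  · rfl
  · intro i hi j _ hij
    obtain ⟨v, hv, rfl⟩ := mem_image.1 hi
    exact (mem_filter.1 ((Finset.ext_iff.1 hij v).1 (mem_filter.2 ⟨hv, rfl⟩))).2

theorem exists_disjoint_blockSizes_eq {κ : Type*} [Nonempty κ] {C : Finset κ}
    {c : κ → ℕ} (hpos : ∀ j ∈ C, 0 < c j) (hsum : ∑ j ∈ C, c j = #s)
    (h : ∀ T ⊆ P.parts, ∑ b ∈ T, #b ≤ ∑ j ∈ C, min #T (c j)) :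
    ∃ Q : Finpartition s, blockSizes Q = C.val.map c ∧ Disjoint P Q := by
  have := Classical.decEq κ
  obtain ⟨f, hfC, hf, hcard⟩ := exists_injOn_card_fiber_le h
  have hfiber : ∀ j ∈ C, #{v ∈ s | f v = j} = c j := by
    refine (sum_eq_sum_iff_of_le hcard).1 ?_
    rw [hsum, card_eq_sum_card_fiberwise hfC]
  have himage : s.image f = C := by
    refine (image_subset_iff.2 hfC).antisymm fun j hj => ?_
    obtain ⟨v, hv⟩ := card_pos.1 ((hpos j hj).trans_eq (hfiber j hj).symm)
    exact mem_image.2 ⟨v, mem_filter.1 hv⟩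
  refine ⟨Finpartition.ofSetSetoid (Setoid.ker f) s, ?_, ?_⟩
  · rw [blockSizes_ofSetSetoid_ker, himage]
    exact Multiset.map_congr rfl hfiber
  · rw [finpartition_disjoint_iff_card_inter_le_one]
    intro b hb t ht
    rw [parts_ofSetSetoid_ker] at ht
    obtain ⟨j, -, rfl⟩ := mem_image.1 ht
    refine card_le_one.2 fun v hv w hw => ?_
    simp only [mem_inter, mem_filter] at hv hw
    exact hf b hb hv.1 hw.1 (hv.2.2.trans hw.2.2.symm)

end BlockSizes

section Shape

variable {n : ℕ}

theorem shape_eq_iff {x : SetPart n} {ν : Nat.Partition n} :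
    shape x = ν ↔ blockSizes x = ν.parts :=
  Nat.Partition.ext_iff

theorem shape_surjective : Function.Surjective (shape (n := n)) := fun ν =>
  (exists_blockSizes_eq (fun _ => ν.parts_pos) (by simp [ν.parts_sum])).imp fun _ => shape_eq_iff.2

theorem domLEConj_iff_exists_disjoint {x : SetPart n} {lam : Nat.Partition n} :
    DomLEConj (shape x) lam ↔ ∃ a, shape a = lam ∧ Disjoint x a := by
  constructor
  · obtain ⟨a₀, rfl⟩ := shape_surjective lam
    intro h
    obtain ⟨a, ha, hdisj⟩ := exists_disjoint_blockSizes_eq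
      (fun c hc => card_pos.2 (a₀.nonempty_of_mem_parts hc)) a₀.sum_card_parts
      (domLEConj_shape_iff.1 h)
    exact ⟨a, shape_eq_iff.2 ha, hdisj⟩
  · rintro ⟨a, rfl, hdisj⟩
    exact domLEConj_shape_iff.2 fun T => sum_card_le_sum_min_of_disjoint hdisj

theorem refLE_shape_iff {x : SetPart n} {ν : Nat.Partition n} :
    RefLE ν (shape x) ↔ ∃ y ≤ x, shape y = ν := by
  constructor
  · rintro ⟨g, hg, hgν⟩
    obtain ⟨p, rfl, hp⟩ := exists_map_eq_of_map_eq_map x.parts hg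
    have hpos : ∀ b ∈ x.parts, ∀ i ∈ p b, 0 < i := fun b hb i hi =>
      ν.parts_pos (hgν ▸ Multiset.mem_sum.2 ⟨b, hb, hi⟩)
    choose R hR using fun b (hb : b ∈ x.parts) => exists_blockSizes_eq (hpos b hb) (hp b hb)
    refine ⟨x.bind R, finpartition_bind_le x R, shape_eq_iff.2 ?_⟩
    rw [blockSizes_bind, ← hgν]
    simp only [hR]
    exact sum_attach x.parts p
  · rintro ⟨y, hy, rfl⟩
    set R : ∀ b ∈ x.parts, Finpartition b := fun _ hb => y.restrict (x.le hb)
    have hy : x.bind R = y := finpartition_bind_restrict_of_le hy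
    refine ⟨x.parts.attach.val.map fun b => blockSizes (R b.1 b.2), ?_, ?_⟩
    · simp only [Multiset.map_map, Function.comp_def, sum_blockSizes]
      exact Multiset.attach_map_val' x.parts.val card
    · exact (blockSizes_bind x R).symm.trans (congrArg blockSizes hy)

theorem eq_of_le_of_shape_eq {x y : SetPart n} (h : y ≤ x) (hshape : shape y = shape x) : y = x :=
  finpartition_eq_of_le_of_card_parts_le h <| by
    simpa [blockSizes, shape] using (congrArg Multiset.card (shape_eq_iff.1 hshape)).le

theorem mem_fi {S : Set (Nat.Partition n)} {x : SetPart n} : x ∈ fi S ↔ shape x ∈ S :=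
  Iff.rfl

theorem forall_mem_fi_exists_isAtom_iff {A : Set (Nat.Partition n)} {x : SetPart n} :
    (∀ a ∈ fi A, ∃ l, IsAtom l ∧ l ≤ x ∧ l ≤ a) ↔ ∀ lam ∈ A, ¬ DomLEConj (shape x) lam := by
  simp only [← not_disjoint_iff_exists_isAtom, domLEConj_iff_exists_disjoint]
  constructor
  · rintro h lam hlam ⟨a, rfl, hdisj⟩
    exact h a hlam hdisj
  · exact fun h a ha hdisj => h _ ha ⟨a, rfl, hdisj⟩

end Shape

theorem blocker_fi_eq_general {n : ℕ} (A : Set (Nat.Partition n)) :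
    blocker (fi A) =
      fi {μ | (∀ lam ∈ A, ¬ DomLEConj μ lam) ∧
        ∀ ν : Nat.Partition n, (∀ lam ∈ A, ¬ DomLEConj ν lam) → RefLE ν μ → ν = μ} := by
  ext x
  simp only [blocker, forall_mem_fi_exists_isAtom_iff]
  simp only [mem_fi, Set.mem_ofPred_eq]
  refine and_congr_right fun _ => ⟨fun hmin ν hν hle => ?_, fun hmin y hy hle => ?_⟩
  · obtain ⟨y, hyx, rfl⟩ := refLE_shape_iff.1 hle
    rw [hmin y hν hyx]
  · exact eq_of_le_of_shape_eq hle (hmin _ hy (refLE_shape_iff.2 ⟨y, hle, rfl⟩))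

/-- Theorem 3.1: for an antichain `A` in `Ref(n)`, the blocker of `fi(A)` in `Π_n`
is `fi(B)`, where `B` consists of the refinement-minimal number partitions among
those that are not dominated by any conjugate `λ'` with `λ ∈ A`. -/
theorem blocker_fi_eq (n : ℕ) (A : Set (Nat.Partition n))
    (hne : A.Nonempty) (hbot : onesPart n ∉ A) (hanti : IsAntichain RefLE A) :
    blocker (fi A) =
      fi {μ | (∀ lam ∈ A, ¬ DomLEConj μ lam) ∧
        ∀ ν : Nat.Partition n, (∀ lam ∈ A, ¬ DomLEConj ν lam) → RefLE ν μ → ν = μ} :=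
  blocker_fi_eq_general A
end

section
/- Fix n and 2 ≤ p ≤ n. In the partition lattice Π_n, the blocker of the antichain A_p of all set partitions of [n] with exactly p − 1 blocks is the antichain fi((p, 1^{n-p})) of all set partitions of hook shape (p, 1^{n-p}) (one block of size p and n − p singleton blocks); conversely, the blocker of fi((p, 1^{n-p})) is A_p. -/
open Finset

/-- The hook-shaped number partition `(p, 1^{n-p})`: one part equal to `p` and
`n - p` parts equal to `1`. -/
def hook (n p : ℕ) (hp : 0 < p) (hpn : p ≤ n) : Nat.Partition n where
  parts := p ::ₘ Multiset.replicate (n - p) 1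
  parts_pos := by
    intro i hi
    simp only [Multiset.mem_cons, Multiset.mem_replicate] at hi
    rcases hi with rfl | ⟨-, rfl⟩
    · exact hp
    · exact one_pos
  parts_sum := by
    simp only [Multiset.sum_cons, Multiset.sum_replicate, smul_eq_mul, mul_one]
    omega

/-!
Two partitions share an atom exactly when they are not disjoint in the lattice, that is, when some
block of one meets some block of the other in at least two elements. By pigeonhole, a partition
with a block of size at least `p` has this relation to every partition with fewer than `p` blocks.
Conversely, a partition whose blocks all have size less than `p` is disjoint from the fibres of a
`(p - 1)`-colouring that is injective on each block, and a partition with at least `p` blocks is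
disjoint from the hook whose large block is a partial transversal of size `p`. So the partitions
sharing atoms with every member of either family form the up-set generated by the other family,
and that family, being an antichain, is the set of minimal elements.
-/

section Blocker

variable {P : Type*} [PartialOrder P] [OrderBot P] [IsAtomic P]

theorem exists_isAtom_le_le_iff_not_disjoint {x a : P} :
    (∃ l : P, IsAtom l ∧ l ≤ x ∧ l ≤ a) ↔ ¬Disjoint x a := by
  constructor
  · rintro ⟨l, hl, hlx, hla⟩ hdisj
    exact hl.1 (le_bot_iff.1 (hdisj hlx hla))
  · intro hdisj
    simp only [Disjoint, not_forall, le_bot_iff] at hdisj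
    obtain ⟨y, hyx, hya, hy⟩ := hdisj
    obtain ⟨l, hl, hly⟩ := (eq_bot_or_exists_atom_le y).resolve_left hy
    exact ⟨l, hl, hly.trans hyx, hly.trans hya⟩

theorem mem_blocker_iff_minimal_s12 {A : Set P} {x : P} :
    x ∈ blocker A ↔ Minimal (fun y ↦ ∀ a ∈ A, ¬Disjoint y a) x := by
  simp only [blocker, exists_isAtom_le_le_iff_not_disjoint, Set.mem_ofPred_eq, minimal_iff,
    eq_comm (a := x)]

theorem blocker_eq_of_isAntichain {A B : Set P} (hB : IsAntichain (· ≤ ·) B)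
    (hAB : ∀ x, (∀ a ∈ A, ¬Disjoint x a) ↔ ∃ b ∈ B, b ≤ x) : blocker A = B := by
  ext x
  simp only [mem_blocker_iff_minimal_s12, hAB]
  exact hB.minimal_mem_upperClosure_iff_mem

end Blocker

section Finpartition

variable {α β : Type*} [DecidableEq α] [DecidableEq β] {s T B : Finset α} {P Q : Finpartition s}
  {k : ℕ}

theorem disjoint_iff_forall_card_inter_le_one :
    Disjoint P Q ↔ ∀ B ∈ P.parts, ∀ C ∈ Q.parts, #(B ∩ C) ≤ 1 := by
  rw [disjoint_iff_inf_le]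
  constructor
  · intro h B hB C hC
    obtain hBC | hBC := (B ∩ C).eq_empty_or_nonempty
    · simp [hBC]
    · have hmem : B ∩ C ∈ (P ⊓ Q).parts := by
        rw [Finpartition.parts_inf]
        exact mem_erase.2 ⟨hBC.ne_empty, mem_image.2 ⟨(B, C), mem_product.2 ⟨hB, hC⟩, rfl⟩⟩
      obtain ⟨D, hD, hBCD⟩ := h hmem
      obtain ⟨a, -, rfl⟩ := Finpartition.mem_bot_iff.1 hD
      exact card_le_card hBCD
  · intro h D hD
    obtain ⟨a, ha⟩ := (P ⊓ Q).nonempty_of_mem_parts hD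
    refine ⟨{a}, Finpartition.mem_bot_iff.2 ⟨a, (P ⊓ Q).subset hD ha, rfl⟩, fun b hb ↦ ?_⟩
    obtain ⟨⟨B, C⟩, hBC, rfl⟩ := mem_image.1 (mem_of_mem_erase hD)
    obtain ⟨hB, hC⟩ := mem_product.1 hBC
    exact mem_singleton.2 (card_le_one.1 (h B hB C hC) b hb a ha)

theorem card_le_card_parts_of_disjoint (h : Disjoint P Q) (hB : B ∈ P.parts) :
    #B ≤ #Q.parts := by
  refine card_le_card_of_injOn Q.part (fun a ha ↦ Q.part_mem.2 (P.subset hB ha)) ?_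
  intro a ha b hb hab
  have hbs := P.subset hB hb
  have haC : a ∈ Q.part b := hab ▸ Q.mem_part (P.subset hB ha)
  exact card_le_one.1 (disjoint_iff_forall_card_inter_le_one.1 h B hB _ (Q.part_mem.2 hbs))
    a (mem_inter.2 ⟨ha, haC⟩) b (mem_inter.2 ⟨hb, Q.mem_part hbs⟩)

theorem eq_of_le_of_card_parts_le (h : P ≤ Q) (hcard : #P.parts ≤ #Q.parts) : P = Q := by
  choose! f hfP hfle using fun B (hB : B ∈ Q.parts) ↦ Finpartition.exists_le_of_le h hB
  have hinj : Set.InjOn f Q.parts := fun B hB C hC hBC ↦ by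
    obtain ⟨a, ha⟩ := P.nonempty_of_mem_parts (hfP B hB)
    exact Q.eq_of_mem_parts hB hC (hfle B hB ha) (hfle C hC (hBC ▸ ha))
  have hsurj : Set.SurjOn f Q.parts P.parts := surjOn_of_injOn_of_card_le f hfP hinj hcard
  refine le_antisymm h fun B hB ↦ ⟨f B, hfP B hB, fun a ha ↦ ?_⟩
  obtain ⟨D, hD, haD⟩ := P.exists_mem (Q.subset hB ha)
  obtain ⟨C, hC, rfl⟩ := hsurj hD
  rwa [Q.eq_of_mem_parts hB hC ha (hfle C hC haD)]

theorem isAntichain_setOf_card_parts_eq (s : Finset α) (k : ℕ) :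
    IsAntichain (· ≤ ·) {P : Finpartition s | #P.parts = k} :=
  fun _ hP _ hQ hne hle ↦ hne (eq_of_le_of_card_parts_le hle (hP.trans hQ.symm).le)

/-- The partition of `s` into the nonempty fibres of `f`. -/
def fiberPartition (s : Finset α) (f : α → β) : Finpartition s :=
  haveI : DecidableRel (Setoid.ker f).r := fun a b ↦ decEq (f a) (f b)
  Finpartition.ofSetSetoid (Setoid.ker f) s

theorem mem_parts_fiberPartition {f : α → β} :
    B ∈ (fiberPartition s f).parts ↔ ∃ a ∈ s, {b ∈ s | f a = f b} = B := by
  simp [fiberPartition, Finpartition.ofSetSetoid_parts, Setoid.ker, Function.onFun]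

theorem card_parts_fiberPartition (f : α → β) :
    #(fiberPartition s f).parts = #(s.image f) := by
  have hparts : (fiberPartition s f).parts = (s.image f).image fun c ↦ {b ∈ s | c = f b} := by
    ext B
    simp [mem_parts_fiberPartition]
  rw [hparts]
  refine card_image_of_injOn fun c hc d _ hcd ↦ ?_
  obtain ⟨a, ha, rfl⟩ := mem_image.1 hc
  have hmem : a ∈ ({b ∈ s | d = f b} : Finset α) := by
    simp only [← hcd, mem_filter, ha, and_self]
  exact (mem_filter.1 hmem).2.symm

theorem disjoint_fiberPartition {f : α → β} (hf : ∀ B ∈ P.parts, Set.InjOn f B) :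
    Disjoint P (fiberPartition s f) := by
  refine disjoint_iff_forall_card_inter_le_one.2 fun B hB C hC ↦ ?_
  obtain ⟨c, -, rfl⟩ := mem_parts_fiberPartition.1 hC
  refine card_le_one.2 fun a ha b hb ↦ ?_
  simp only [mem_inter, mem_filter] at ha hb
  exact hf B hB ha.1 hb.1 (ha.2.2.symm.trans hb.2.2)

theorem exists_le_card_parts_eq (hPk : #P.parts ≤ k) (hks : k ≤ #s) :
    ∃ Q ≤ P, #Q.parts = k := by
  obtain ⟨r, hrs, hr⟩ := P.exists_subset_part_bijOn
  have hrk : #r ≤ k := (card_le_card_of_injOn P.part hr.mapsTo hr.injOn).trans hPk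
  obtain ⟨t, hrt, hts, rfl⟩ := exists_subsuperset_card_eq hrs hrk hks
  choose! rep hrep hpart using fun a (ha : a ∈ s) ↦ hr.surjOn (P.part_mem.2 ha)
  -- Retract `s` onto `t` inside the blocks of `P`; the fibres, one per point of `t`, refine `P`.
  let g : α → α := fun a ↦ if a ∈ t then a else rep a
  have hg_mem : ∀ a ∈ s, g a ∈ t := fun a ha ↦ by
    by_cases hat : a ∈ t
    · simpa only [g, if_pos hat] using hat
    · simpa only [g, if_neg hat] using hrt (hrep a ha)
  have hg_part : ∀ a ∈ s, P.part (g a) = P.part a := fun a ha ↦ by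
    by_cases hat : a ∈ t
    · simp only [g, if_pos hat]
    · simpa only [g, if_neg hat] using hpart a ha
  have himage : s.image g = t := by
    refine (image_subset_iff.2 hg_mem).antisymm fun a ha ↦ ?_
    exact mem_image.2 ⟨a, hts ha, if_pos ha⟩
  refine ⟨fiberPartition s g, fun C hC ↦ ?_, by rw [card_parts_fiberPartition, himage]⟩
  obtain ⟨a, ha, rfl⟩ := mem_parts_fiberPartition.1 hC
  refine ⟨P.part a, P.part_mem.2 ha, fun b hb ↦ ?_⟩
  obtain ⟨hbs, hab⟩ := mem_filter.1 hb
  rw [← hg_part a ha, hab, hg_part b hbs]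
  exact P.mem_part hbs

theorem exists_le_card_parts_eq_iff (hks : k ≤ #s) :
    (∃ Q : Finpartition s, #Q.parts = k ∧ Q ≤ P) ↔ #P.parts ≤ k := by
  constructor
  · rintro ⟨Q, rfl, hQP⟩
    exact Finpartition.card_mono hQP
  · intro hPk
    obtain ⟨Q, hQP, hQ⟩ := exists_le_card_parts_eq hPk hks
    exact ⟨Q, hQ, hQP⟩

theorem exists_coloring_injOn_parts (hP : ∀ B ∈ P.parts, #B ≤ k) :
    ∃ f : α → ℕ, (∀ a ∈ s, f a < k) ∧ ∀ B ∈ P.parts, Set.InjOn f B := by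
  have hemb (B) (hB : B ∈ P.parts) : ∃ e : α → ℕ, (B : Set α) ⊆ e ⁻¹' range k ∧ Set.InjOn e B := by
    refine B.finite_toSet.exists_injOn_of_encard_le ?_
    rw [Set.encard_coe_eq_coe_finsetCard, Set.encard_coe_eq_coe_finsetCard, card_range]
    exact_mod_cast hP B hB
  choose! e he_mem he_inj using hemb
  refine ⟨fun a ↦ e (P.part a) a, fun a ha ↦ ?_, fun B hB a ha b hb hab ↦ he_inj B hB ha hb ?_⟩
  · exact mem_range.1 (he_mem _ (P.part_mem.2 ha) (P.mem_part ha))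
  · simpa only [P.part_eq_of_mem hB ha, P.part_eq_of_mem hB hb] using hab

theorem exists_disjoint_card_parts_eq (hP : ∀ B ∈ P.parts, #B ≤ k) (hks : k ≤ #s) :
    ∃ Q : Finpartition s, #Q.parts = k ∧ Disjoint P Q := by
  obtain ⟨f, hfk, hf⟩ := exists_coloring_injOn_parts hP
  have hcard : #(fiberPartition s f).parts ≤ k := by
    rw [card_parts_fiberPartition, ← card_range k]
    exact card_le_card (image_subset_iff.2 fun a ha ↦ mem_range.2 (hfk a ha))
  obtain ⟨Q, hQ, hQk⟩ := exists_le_card_parts_eq hcard hks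
  exact ⟨Q, hQk, (disjoint_fiberPartition hf).mono_right hQ⟩

theorem forall_card_parts_eq_not_disjoint_iff (hks : k ≤ #s) :
    (∀ Q : Finpartition s, #Q.parts = k → ¬Disjoint P Q) ↔ ∃ B ∈ P.parts, k < #B := by
  constructor
  · contrapose!
    exact fun hP ↦ exists_disjoint_card_parts_eq hP hks
  · rintro ⟨B, hB, hkB⟩ Q rfl hPQ
    exact hkB.not_ge (card_le_card_parts_of_disjoint hPQ hB)

/-- The partition of `s` whose only possibly non-singleton block is `T`. -/
def hookPartition (hT : T.Nonempty) (hTs : T ⊆ s) : Finpartition s :=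
  (⊥ : Finpartition (s \ T)).extend hT.ne_empty sdiff_disjoint (sdiff_union_of_subset hTs)

theorem mem_parts_hookPartition {hT : T.Nonempty} {hTs : T ⊆ s} :
    B ∈ (hookPartition hT hTs).parts ↔ B = T ∨ ∃ a ∈ s \ T, {a} = B := by
  rw [hookPartition, Finpartition.extend_parts, mem_insert, Finpartition.mem_bot_iff]

theorem map_card_parts_hookPartition (hT : T.Nonempty) (hTs : T ⊆ s) :
    (hookPartition hT hTs).parts.val.map card = #T ::ₘ Multiset.replicate (#s - #T) 1 := by
  have hT_notMem : T ∉ (⊥ : Finpartition (s \ T)).parts := fun h ↦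
    hT.ne_empty (disjoint_self.1 (disjoint_sdiff.mono_right (Finpartition.subset _ h)))
  rw [hookPartition, Finpartition.extend_parts, insert_val_of_notMem hT_notMem, Multiset.map_cons,
    Finpartition.parts_bot, map_val, Multiset.map_map, ← card_sdiff_of_subset hTs]
  exact congrArg _ (Multiset.map_const' (s \ T).val 1)

theorem hookPartition_le {hT : T.Nonempty} {hTs : T ⊆ s} (hB : B ∈ P.parts) (hTB : T ⊆ B) :
    hookPartition hT hTs ≤ P := by
  intro C hC
  obtain rfl | ⟨a, ha, rfl⟩ := mem_parts_hookPartition.1 hC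
  · exact ⟨B, hB, hTB⟩
  · have has := (mem_sdiff.1 ha).1
    exact ⟨P.part a, P.part_mem.2 has, singleton_subset_iff.2 (P.mem_part has)⟩

theorem disjoint_hookPartition {hT : T.Nonempty} {hTs : T ⊆ s} (h : Set.InjOn P.part T) :
    Disjoint P (hookPartition hT hTs) := by
  refine disjoint_iff_forall_card_inter_le_one.2 fun B hB C hC ↦ ?_
  obtain rfl | ⟨a, -, rfl⟩ := mem_parts_hookPartition.1 hC
  · refine card_le_one.2 fun a ha b hb ↦ ?_
    rw [mem_inter] at ha hb
    exact h ha.2 hb.2 ((P.part_eq_of_mem hB ha.1).trans (P.part_eq_of_mem hB hb.1).symm)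
  · exact card_le_card inter_subset_right

end Finpartition

section Shape

variable {n p : ℕ} {σ : SetPart n}

theorem card_parts_shape (σ : SetPart n) : (shape σ).parts.card = #σ.parts :=
  Multiset.card_map _ _

theorem isAntichain_fi_singleton (μ : Nat.Partition n) : IsAntichain (· ≤ ·) (fi {μ}) :=
  (isAntichain_setOf_card_parts_eq univ μ.parts.card).subset fun σ (hσ : shape σ = μ) ↦ by
    rw [Set.mem_ofPred_eq, ← card_parts_shape, hσ]

theorem exists_mem_parts_card_eq_of_mem_fi_hook {hp : 0 < p} {hpn : p ≤ n}
    (hσ : σ ∈ fi {hook n p hp hpn}) : ∃ B ∈ σ.parts, #B = p := by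
  have hshape : shape σ = hook n p hp hpn := hσ
  have hmem : p ∈ (shape σ).parts := by
    simp only [hshape, hook, Multiset.mem_cons_self]
  exact Multiset.mem_map.1 hmem

theorem hookPartition_mem_fi_hook {T : Finset (Fin n)} {hT : T.Nonempty} {hp : 0 < p}
    {hpn : p ≤ n} (hTp : #T = p) :
    hookPartition hT (subset_univ T) ∈ fi {hook n p hp hpn} := by
  refine Nat.Partition.ext ?_
  simp only [shape, hook, map_card_parts_hookPartition, hTp, card_univ, Fintype.card_fin]

theorem exists_mem_fi_hook_le_iff {hp : 0 < p} {hpn : p ≤ n} :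
    (∃ τ ∈ fi {hook n p hp hpn}, τ ≤ σ) ↔ ∃ B ∈ σ.parts, p ≤ #B := by
  constructor
  · rintro ⟨τ, hτ, hτσ⟩
    obtain ⟨B, hB, rfl⟩ := exists_mem_parts_card_eq_of_mem_fi_hook hτ
    obtain ⟨C, hC, hBC⟩ := hτσ hB
    exact ⟨C, hC, card_le_card hBC⟩
  · rintro ⟨B, hB, hpB⟩
    obtain ⟨T, hTB, hTp⟩ := exists_subset_card_eq hpB
    have hT : T.Nonempty := card_pos.1 (hTp ▸ hp)
    exact ⟨hookPartition hT (subset_univ T), hookPartition_mem_fi_hook hTp,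
      hookPartition_le hB hTB⟩

theorem forall_mem_fi_hook_not_disjoint_iff {hp : 0 < p} {hpn : p ≤ n} :
    (∀ τ ∈ fi {hook n p hp hpn}, ¬Disjoint σ τ) ↔ #σ.parts < p := by
  constructor
  · contrapose!
    intro hpσ
    obtain ⟨r, -, hr⟩ := σ.exists_subset_part_bijOn
    have hrσ : #σ.parts ≤ #r := card_le_card_of_surjOn σ.part hr.surjOn
    obtain ⟨T, hTr, hTp⟩ := exists_subset_card_eq (hpσ.trans hrσ)
    have hT : T.Nonempty := card_pos.1 (hTp ▸ hp)
    exact ⟨hookPartition hT (subset_univ T), hookPartition_mem_fi_hook hTp,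
      disjoint_hookPartition (hr.injOn.mono hTr)⟩
  · intro hσp τ hτ hdisj
    obtain ⟨B, hB, rfl⟩ := exists_mem_parts_card_eq_of_mem_fi_hook hτ
    exact hσp.not_ge (card_le_card_parts_of_disjoint hdisj.symm hB)

end Shape

/-- Example 3.2: in `Π_n`, the blocker of the antichain of all set partitions with
exactly `p - 1` blocks is the antichain of all set partitions of hook shape
`(p, 1^{n-p})`, and conversely. -/
theorem blocker_card_blocks_hook (n p : ℕ) (hp : 2 ≤ p) (hpn : p ≤ n) :
    blocker {σ : SetPart n | σ.parts.card = p - 1} =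
        fi {hook n p (by omega) hpn} ∧
      blocker (fi {hook n p (by omega) hpn}) =
        {σ : SetPart n | σ.parts.card = p - 1} := by
  obtain ⟨k, rfl⟩ := Nat.exists_eq_add_of_le' (one_le_two.trans hp)
  have hk : k ≤ #(univ : Finset (Fin n)) := by
    rw [card_univ, Fintype.card_fin]
    exact Nat.le_of_succ_le hpn
  rw [Nat.add_sub_cancel]
  constructor
  · refine blocker_eq_of_isAntichain (isAntichain_fi_singleton _) fun σ ↦ ?_
    rw [exists_mem_fi_hook_le_iff]
    exact forall_card_parts_eq_not_disjoint_iff hk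
  · refine blocker_eq_of_isAntichain (isAntichain_setOf_card_parts_eq univ k) fun σ ↦ ?_
    rw [forall_mem_fi_hook_not_disjoint_iff, Nat.lt_add_one_iff]
    exact (exists_le_card_parts_eq_iff hk).symm
end
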